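/- arXiv:2201.04825 — 5 statements merged into one kernel-verified Lean document; each statement's English description precedes it below -/
import Mathlib

section
/- For every dimension d ≥ 2, every ξ ∈ ℂ^d and every η₁ ∈ ℂ one has det(U₀(ξ) + η₁ e₁⊗e₁) = (ξ² + ξ₁η₁) ξ₁^{d−2} (for d = 2 the factor ξ₁^{d−2} is interpreted as 1). -/
open Matrix Finset

noncomputable section

/-- `tens ξ η` is the matrix `ξ ⊗ η` acting by `(ξ ⊗ η) g = ⟨ξ, g⟩ η`
(bilinear pairing, no conjugation); its `(i,j)` entry is `η i * ξ j`. -/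
def tens {n : ℕ} (ξ η : Fin n → ℂ) : Matrix (Fin n) (Fin n) ℂ :=
  Matrix.vecMulVec η ξ

/-- `U₀(ξ) = ξ₁ I + ∑_{j=2}^d ξ_j (e_j ⊗ e₁ - e₁ ⊗ e_j)` (0-indexed). -/
def U0 {n : ℕ} (ξ : Fin (n + 1) → ℂ) : Matrix (Fin (n + 1)) (Fin (n + 1)) ℂ :=
  ξ 0 • (1 : Matrix (Fin (n + 1)) (Fin (n + 1)) ℂ) +
    ∑ j ∈ Finset.univ.filter (fun j : Fin (n + 1) => j ≠ 0),
      ξ j • (tens (Pi.single j 1) (Pi.single 0 1) - tens (Pi.single 0 1) (Pi.single j 1))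

/-!
The term `j = 1` missing from the sum in `U₀(ξ)` would vanish, so `U₀(ξ) = ξ₁ I + ξ ⊗ e₁ - e₁ ⊗ ξ`,
and `U₀(ξ) + η₁ e₁ ⊗ e₁` is a perturbation of rank at most two of the scalar matrix `ξ₁ I`.
Sylvester's identity, as an identity between characteristic polynomials (so that `ξ₁` may vanish),
pulls out the factor `ξ₁ ^ (d - 2)` and leaves the determinant of the `2 × 2` matrix
`[ξ₁ + (ξ₁ + η₁), -(ξ² + η₁ ξ₁); 1, ξ₁ - ξ₁]`, which is `ξ² + ξ₁ η₁`.
-/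

section DetScalarAdd

variable {R m : Type*} [CommRing R] [Fintype m] [DecidableEq m]

theorem det_smul_one_add_mul_of_card_le {n : Type*} [Fintype n] [DecidableEq n]
    (c : R) (A : Matrix m n R) (B : Matrix n m R) (h : Fintype.card n ≤ Fintype.card m) :
    (c • 1 + A * B).det = c ^ (Fintype.card m - Fintype.card n) * (c • 1 + B * A).det := by
  have h_eval := congrArg (Polynomial.eval c) (charpoly_mul_comm_of_le (-A) B h)
  simpa [eval_charpoly, smul_one_eq_diagonal] using h_eval

theorem det_smul_one_add_vecMulVec_add_vecMulVec [Nontrivial m] (c : R) (u₁ v₁ u₂ v₂ : m → R) :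
    (c • 1 + (vecMulVec u₁ v₁ + vecMulVec u₂ v₂)).det =
      c ^ (Fintype.card m - 2) *
        ((c + v₁ ⬝ᵥ u₁) * (c + v₂ ⬝ᵥ u₂) - (v₁ ⬝ᵥ u₂) * (v₂ ⬝ᵥ u₁)) := by
  have h_factor : vecMulVec u₁ v₁ + vecMulVec u₂ v₂ = (of ![u₁, u₂])ᵀ * of ![v₁, v₂] := by
    ext i j
    simp [mul_apply, vecMulVec_apply]
  have h_card : Fintype.card (Fin 2) ≤ Fintype.card m := by
    rw [Fintype.card_fin]
    exact Fintype.one_lt_card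
  rw [h_factor, det_smul_one_add_mul_of_card_le c _ _ h_card, Fintype.card_fin, det_fin_two]
  simp [vecMul, dotProduct]

end DetScalarAdd

section SkewRankTwo

variable {R ι : Type*} [Fintype ι] [DecidableEq ι]

theorem sum_ne_smul_vecMulVec_single_sub [Ring R] (i : ι) (ξ : ι → R) :
    ∑ j with j ≠ i, ξ j • (vecMulVec (Pi.single i 1) (Pi.single j 1) -
        vecMulVec (Pi.single j 1) (Pi.single i 1)) =
      vecMulVec (Pi.single i 1) ξ - vecMulVec ξ (Pi.single i 1) := by
  rw [Finset.sum_filter_of_ne (by rintro j - h rfl; simp at h)]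
  ext k l
  simp [Matrix.sum_apply, vecMulVec_apply, Pi.single_apply, mul_sub, Finset.sum_sub_distrib]

theorem statement2_general [CommRing R] [Nontrivial ι] (i : ι) (ξ : ι → R) (η : R) :
    (ξ i • (1 : Matrix ι ι R) +
        ∑ j with j ≠ i, ξ j • (vecMulVec (Pi.single i 1) (Pi.single j 1) -
          vecMulVec (Pi.single j 1) (Pi.single i 1)) +
        η • vecMulVec (Pi.single i 1) (Pi.single i 1)).det =
      (ξ ⬝ᵥ ξ + ξ i * η) * ξ i ^ (Fintype.card ι - 2) := by
  let e : ι → R := Pi.single i 1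
  have h_rank_two : vecMulVec e ξ - vecMulVec ξ e + η • vecMulVec e e =
      vecMulVec e (ξ + η • e) + vecMulVec (-ξ) e := by
    rw [vecMulVec_add, vecMulVec_smul, neg_vecMulVec]
    abel
  rw [sum_ne_smul_vecMulVec_single_sub, add_assoc, h_rank_two,
    det_smul_one_add_vecMulVec_add_vecMulVec]
  simp only [e, dotProduct_single, single_dotProduct, add_dotProduct, smul_dotProduct,
    dotProduct_neg, Pi.add_apply, Pi.smul_apply, Pi.single_eq_same, smul_eq_mul, mul_one, one_mul]
  ring

end SkewRankTwo

/-- For every `d ≥ 2`, `ξ ∈ ℂ^d`, `η₁ ∈ ℂ`: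
`det(U₀(ξ) + η₁ e₁⊗e₁) = (ξ² + ξ₁ η₁) ξ₁^{d-2}` (here the dimension is `d + 2`). -/
theorem statement2 (d : ℕ) (ξ : Fin (d + 2) → ℂ) (η₁ : ℂ) :
    (U0 ξ + η₁ • tens (Pi.single 0 1) (Pi.single 0 1)).det
      = ((∑ i, ξ i * ξ i) + ξ 0 * η₁) * ξ 0 ^ d := by
  have h := statement2_general 0 ξ η₁
  rwa [Fintype.card_fin, Nat.add_sub_cancel] at h
end
end

section
/- Let d ≥ 3, let ξ₁ ∈ ℂ with ξ₁ ≠ 0, let s ∈ ℝ, and let η₁ ∈ ℂ be such that ξ₁² + s² + ξ₁η₁ ≠ 0. Then the matrix U₀(ξ₁e₁ + s e₂) + η₁ e₁⊗e₁ is invertible and its inverse is the d×d matrix B whose upper-left 2×2 block (in the convention that the (i,j) entry of a matrix M is the coefficient of g_j in the i-th component of Mg) is (ξ₁² + s² + ξ₁η₁)^{−1} · [[ξ₁, −s],[s, ξ₁+η₁]], whose diagonal entries B_{jj} for 3 ≤ j ≤ d all equal ξ₁^{−1}, and all of whose other entries are 0. -/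
open Matrix Finset

noncomputable section

/-! The first two coordinates span an invariant plane, on which the matrix acts by
`[[ξ₁ + η₁, s], [-s, ξ₁]]`, of determinant `ξ₁² + s² + ξ₁η₁`; on the remaining coordinates it acts
as the scalar `ξ₁`. The inverse is therefore the adjugate formula on the plane and `ξ₁⁻¹` off it. -/

section BlockScalar

variable {m k n R : Type*} [DecidableEq k]

/-- The matrix indexed by `n ≃ m ⊕ k` that acts by `A` on the coordinates in `m` and by the
scalar `c` on those in `k`. -/
def blockScalar [Zero R] (e : m ⊕ k ≃ n) (A : Matrix m m R) (c : R) : Matrix n n R :=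
  reindex e e (fromBlocks A 0 0 (diagonal fun _ => c))

theorem blockScalar_one [DecidableEq m] [DecidableEq n] [Zero R] [One R] (e : m ⊕ k ≃ n) :
    blockScalar e (1 : Matrix m m R) 1 = 1 := by
  simp only [blockScalar, diagonal_one, fromBlocks_one, reindex_apply, submatrix_one_equiv]

theorem blockScalar_mul [Fintype m] [Fintype n] [NonUnitalNonAssocSemiring R]
    (e : m ⊕ k ≃ n) (A A' : Matrix m m R) (c c' : R) :
    blockScalar e A c * blockScalar e A' c' = blockScalar e (A * A') (c * c') := by
  have : Fintype k := .ofInjective _ (e.injective.comp Sum.inr_injective)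
  simp only [blockScalar, reindex_apply, submatrix_mul_equiv, fromBlocks_multiply,
    diagonal_mul_diagonal, Matrix.mul_zero, Matrix.zero_mul, add_zero, zero_add]

theorem blockScalar_mul_blockScalar_inv [Fintype m] [DecidableEq m] [Fintype n] [DecidableEq n]
    [Field R] (e : m ⊕ k ≃ n) {A : Matrix m m R} (hA : A.det ≠ 0) {c : R}
    (hc : c ≠ 0) : blockScalar e A c * blockScalar e A⁻¹ c⁻¹ = 1 := by
  rw [blockScalar_mul, mul_nonsing_inv A hA.isUnit, mul_inv_cancel₀ hc, blockScalar_one]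

end BlockScalar

/-- The splitting of the indices `0, …, d + 1` into the first two and the remaining `d`. -/
def firstTwoEquiv (d : ℕ) : Fin 2 ⊕ Fin d ≃ Fin (d + 2) :=
  finSumFinEquiv.trans (finCongr (Nat.add_comm 2 d))

theorem blockScalar_firstTwoEquiv_apply {R : Type*} [Zero R] {d : ℕ}
    (A : Matrix (Fin 2) (Fin 2) R) (c : R) (i j : Fin (d + 2)) :
    blockScalar (firstTwoEquiv d) A c i j =
      if i = 0 then (if j = 0 then A 0 0 else if j = 1 then A 0 1 else 0)
      else if i = 1 then (if j = 0 then A 1 0 else if j = 1 then A 1 1 else 0)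
      else if j = i then c else 0 := by
  have apply_zero : firstTwoEquiv d (.inl 0) = 0 := rfl
  have apply_one : firstTwoEquiv d (.inl 1) = 1 := rfl
  have apply_inr (l : Fin d) : firstTwoEquiv d (.inr l) = l.succ.succ :=
    Fin.ext (Nat.add_comm 2 l)
  have zero_ne (l : Fin d) : 0 ≠ l.succ.succ := (Fin.succ_ne_zero _).symm
  have ne_one (l : Fin d) : l.succ.succ ≠ 1 := by simp [Fin.ext_iff]
  obtain ⟨i, rfl⟩ := (firstTwoEquiv d).surjective i
  obtain ⟨j, rfl⟩ := (firstTwoEquiv d).surjective j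
  simp only [blockScalar, reindex_apply, submatrix_apply, Equiv.symm_apply_apply]
  rcases i with i | i <;> rcases j with j | j
  · fin_cases i <;> fin_cases j <;> simp [apply_zero, apply_one]
  · fin_cases i <;> simp [apply_zero, apply_one, apply_inr, ne_one]
  · fin_cases j <;> simp [apply_zero, apply_one, apply_inr, zero_ne, ne_one, (ne_one _).symm]
  · simp [apply_inr, ne_one, diagonal_apply, eq_comm]

theorem U0_smul_single_zero_add_smul_single {n : ℕ} {j : Fin (n + 1)} (hj : j ≠ 0) (x s : ℂ) :
    U0 (x • Pi.single 0 1 + s • Pi.single j 1) =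
      x • 1 +
        s • (tens (Pi.single j 1) (Pi.single 0 1) - tens (Pi.single 0 1) (Pi.single j 1)) := by
  rw [U0, Finset.sum_eq_single_of_mem j (by simpa using hj)]
  · simp [hj, hj.symm]
  · intro l hl hlj
    have hl0 : l ≠ 0 := by simpa using hl
    simp [hl0, hlj]

/-- The matrix by which `U₀(ξ₁ e₁ + s e₂) + η₁ e₁ ⊗ e₁` acts on the span of `e₁` and `e₂`. -/
def planeBlock {R : Type*} [Ring R] (ξ₁ s η₁ : R) : Matrix (Fin 2) (Fin 2) R :=
  !![ξ₁ + η₁, s; -s, ξ₁]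

theorem det_planeBlock {R : Type*} [CommRing R] (ξ₁ s η₁ : R) :
    (planeBlock ξ₁ s η₁).det = ξ₁ ^ 2 + s ^ 2 + ξ₁ * η₁ := by
  rw [planeBlock, det_fin_two_of]
  ring

theorem inv_planeBlock {K : Type*} [Field K] (ξ₁ s η₁ : K) :
    (planeBlock ξ₁ s η₁)⁻¹ = (ξ₁ ^ 2 + s ^ 2 + ξ₁ * η₁)⁻¹ • !![ξ₁, -s; s, ξ₁ + η₁] := by
  rw [Matrix.inv_def, det_planeBlock, Ring.inverse_eq_inv', planeBlock, adjugate_fin_two_of,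
    neg_neg]

theorem U0_add_smul_tens_eq_blockScalar (d : ℕ) (ξ₁ s η₁ : ℂ) :
    U0 (ξ₁ • (Pi.single 0 1 : Fin (d + 2) → ℂ) + s • (Pi.single 1 1 : Fin (d + 2) → ℂ))
      + η₁ • tens (Pi.single 0 1) (Pi.single 0 1) =
    blockScalar (firstTwoEquiv d) (planeBlock ξ₁ s η₁) ξ₁ := by
  rw [U0_smul_single_zero_add_smul_single one_ne_zero]
  ext i j
  rw [blockScalar_firstTwoEquiv_apply]
  simp only [tens, planeBlock, Matrix.add_apply, Matrix.sub_apply, Matrix.smul_apply,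
    vecMulVec_apply, Pi.single_apply, Matrix.one_apply, smul_eq_mul]
  split_ifs <;> simp_all

theorem statement4_general (d : ℕ) (ξ₁ : ℂ) (hξ₁ : ξ₁ ≠ 0) (s η₁ : ℂ)
    (hΔ : ξ₁ ^ 2 + s ^ 2 + ξ₁ * η₁ ≠ 0) :
    let Δ : ℂ := ξ₁ ^ 2 + s ^ 2 + ξ₁ * η₁
    let M := U0 (ξ₁ • (Pi.single 0 1 : Fin (d + 2) → ℂ) + s • (Pi.single 1 1 : Fin (d + 2) → ℂ))
      + η₁ • tens (Pi.single 0 1) (Pi.single 0 1)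
    let B : Matrix (Fin (d + 2)) (Fin (d + 2)) ℂ := fun i j =>
      if i = 0 then (if j = 0 then ξ₁ / Δ else if j = 1 then -s / Δ else 0)
      else if i = 1 then (if j = 0 then s / Δ else if j = 1 then (ξ₁ + η₁) / Δ else 0)
      else if j = i then ξ₁⁻¹ else 0
    M * B = 1 ∧ B * M = 1 := by
  intro Δ M B
  have hM : M = blockScalar (firstTwoEquiv d) (planeBlock ξ₁ s η₁) ξ₁ :=
    U0_add_smul_tens_eq_blockScalar d ξ₁ s η₁
  have hB : B = blockScalar (firstTwoEquiv d) (planeBlock ξ₁ s η₁)⁻¹ ξ₁⁻¹ := by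
    ext i j
    simp [B, Δ, blockScalar_firstTwoEquiv_apply, inv_planeBlock, div_eq_inv_mul]
  have hMB : M * B = 1 := by
    rw [hM, hB]
    exact blockScalar_mul_blockScalar_inv _ (by rwa [det_planeBlock]) hξ₁
  exact ⟨hMB, mul_eq_one_comm.mp hMB⟩

/-- Lemma 2.2, explicit inverse (dimension `d + 3 ≥ 3`): the inverse of
`U₀(ξ₁e₁ + s e₂) + η₁ e₁⊗e₁` is the matrix `B` with upper-left 2×2 block
`Δ⁻¹ [[ξ₁, -s],[s, ξ₁+η₁]]`, diagonal entries `ξ₁⁻¹` in positions `j ≥ 3`,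
and zeros elsewhere, where `Δ = ξ₁² + s² + ξ₁η₁`. -/
theorem statement4 (d : ℕ) (ξ₁ : ℂ) (hξ₁ : ξ₁ ≠ 0) (s : ℝ) (η₁ : ℂ)
    (hΔ : ξ₁ ^ 2 + (s : ℂ) ^ 2 + ξ₁ * η₁ ≠ 0) :
    let Δ : ℂ := ξ₁ ^ 2 + (s : ℂ) ^ 2 + ξ₁ * η₁
    let M := U0 (ξ₁ • (Pi.single 0 1 : Fin (d + 3) → ℂ) + (s : ℂ) • (Pi.single 1 1 : Fin (d + 3) → ℂ))
      + η₁ • tens (Pi.single 0 1) (Pi.single 0 1)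
    let B : Matrix (Fin (d + 3)) (Fin (d + 3)) ℂ := fun i j =>
      if i = 0 then (if j = 0 then ξ₁ / Δ else if j = 1 then -(s : ℂ) / Δ else 0)
      else if i = 1 then (if j = 0 then (s : ℂ) / Δ else if j = 1 then (ξ₁ + η₁) / Δ else 0)
      else if j = i then ξ₁⁻¹ else 0
    M * B = 1 ∧ B * M = 1 :=
  statement4_general (d + 1) ξ₁ hξ₁ s η₁ hΔ
end
end

section
/- Let d ≥ 2, let U be an invertible d×d complex matrix and let ξ, ν ∈ ℂ^d satisfy U ξ = ξ² ν with ξ² ≠ 0, and suppose that U Uᵀ commutes with ν⊗ν. Then (ξ² I_d − ξ⊗ξ) Uᵀ (ν⊗ν) = 0; in other words, with Π_s(ξ) = ξ²I_d − ξ⊗ξ and Π_p(ν) = ν⊗ν, one has Π_s(ξ) Uᵀ Π_p(ν) = 0. -/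
open Matrix Finset

noncomputable section

/-!
Write `s = ξ²`, `N = ν ⊗ ν`, and let `V` be a left inverse of `U`, so that `ξ = s V ν`. Pairing this
with itself gives `s = s² ⟨Vν, Vν⟩`, and since `N` has rank one, `s N = s² N VᵀV N`. Moving `UUᵀ`
past the first `N` lets it cancel `VᵀV`, which leaves `s UUᵀ N = s² N²`. Applying `V` turns this
into `s Uᵀ N = (ξ ⊗ ξ) Uᵀ N`. No division occurs, so any commutative ring will do.
-/

section LeftInverse

variable {R m n : Type*} [Fintype n]

section CommSemiring

variable [CommSemiring R] {s : R} {U : Matrix m n R} {V : Matrix n m R} {ξ : n → R} {ν : m → R}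

theorem vecMulVec_self_mul_transpose (hξ : U *ᵥ ξ = s • ν) :
    vecMulVec ξ ξ * Uᵀ = s • vecMulVec ξ ν := by
  rw [vecMulVec_mul, vecMul_transpose, hξ, vecMulVec_smul]

variable [Fintype m]

theorem vecMulVec_self_mul_mul_vecMulVec_self (v : m → R) (A : Matrix m m R) :
    vecMulVec v v * A * vecMulVec v v = (v ⬝ᵥ A *ᵥ v) • vecMulVec v v := by
  rw [Matrix.mul_assoc, mul_vecMulVec, vecMulVec_mul_vecMulVec, vecMulVec_smul]

variable [DecidableEq n]

theorem smul_mulVec_of_leftInverse (hVU : V * U = 1) (hξ : U *ᵥ ξ = s • ν) :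
    s • V *ᵥ ν = ξ := by
  rw [← mulVec_smul, ← hξ, mulVec_mulVec, hVU, one_mulVec]

theorem smul_vecMulVec_self_of_leftInverse (hVU : V * U = 1)
    (hξ : U *ᵥ ξ = (ξ ⬝ᵥ ξ) • ν) :
    (ξ ⬝ᵥ ξ) • vecMulVec ν ν =
      (ξ ⬝ᵥ ξ) ^ 2 • (vecMulVec ν ν * (Vᵀ * V) * vecMulVec ν ν) := by
  have hVν : (ξ ⬝ᵥ ξ) • V *ᵥ ν = ξ := smul_mulVec_of_leftInverse hVU hξ
  have hpairing : ν ⬝ᵥ (Vᵀ * V) *ᵥ ν = V *ᵥ ν ⬝ᵥ V *ᵥ ν := by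
    rw [← mulVec_mulVec, dotProduct_mulVec, vecMul_transpose]
  have hscalar : ξ ⬝ᵥ ξ = (ξ ⬝ᵥ ξ) ^ 2 * (V *ᵥ ν ⬝ᵥ V *ᵥ ν) :=
    calc
      ξ ⬝ᵥ ξ = ((ξ ⬝ᵥ ξ) • V *ᵥ ν) ⬝ᵥ ((ξ ⬝ᵥ ξ) • V *ᵥ ν) := by rw [hVν]
      _ = (ξ ⬝ᵥ ξ) ^ 2 * (V *ᵥ ν ⬝ᵥ V *ᵥ ν) := by
        rw [smul_dotProduct, dotProduct_smul, smul_eq_mul, smul_eq_mul, sq, mul_assoc]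
  rw [vecMulVec_self_mul_mul_vecMulVec_self, hpairing, smul_smul, ← hscalar]

theorem smul_mul_transpose_mul_vecMulVec_self (hVU : V * U = 1)
    (hξ : U *ᵥ ξ = (ξ ⬝ᵥ ξ) • ν) (hcomm : Commute (U * Uᵀ) (vecMulVec ν ν)) :
    (ξ ⬝ᵥ ξ) • (U * Uᵀ * vecMulVec ν ν) = (ξ ⬝ᵥ ξ) ^ 2 • (vecMulVec ν ν * vecMulVec ν ν) := by
  set s := ξ ⬝ᵥ ξ
  set N := vecMulVec ν ν with hN
  have hcancel : Uᵀ * Vᵀ = 1 := by rw [← transpose_mul, hVU, transpose_one]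
  have hUVN : s • (U * (V * N)) = s • N := by
    rw [hN, mul_vecMulVec, mul_vecMulVec, ← smul_vecMulVec, ← mulVec_smul,
      smul_mulVec_of_leftInverse hVU hξ, hξ, smul_vecMulVec]
  calc
    s • (U * Uᵀ * N) = s ^ 2 • (U * Uᵀ * N * Vᵀ * V * N) := by
      rw [← Matrix.mul_smul, smul_vecMulVec_self_of_leftInverse hVU hξ, Matrix.mul_smul]
      simp only [N, s, Matrix.mul_assoc]
    _ = s ^ 2 • (N * U * (Uᵀ * Vᵀ) * V * N) := by
      rw [hcomm.eq]
      simp only [Matrix.mul_assoc]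
    _ = s • (N * (s • (U * (V * N)))) := by
      rw [hcancel, Matrix.mul_one, Matrix.mul_smul, smul_smul, ← sq]
      simp only [Matrix.mul_assoc]
    _ = s ^ 2 • (N * N) := by
      rw [hUVN, Matrix.mul_smul, smul_smul, ← sq]

end CommSemiring

theorem statement11_general [CommRing R] [Fintype m] [DecidableEq n] {U : Matrix m n R}
    {V : Matrix n m R} (hVU : V * U = 1) {ξ : n → R} {ν : m → R}
    (hξ : U *ᵥ ξ = (ξ ⬝ᵥ ξ) • ν) (hcomm : Commute (U * Uᵀ) (vecMulVec ν ν)) :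
    ((ξ ⬝ᵥ ξ) • (1 : Matrix n n R) - vecMulVec ξ ξ) * Uᵀ * vecMulVec ν ν = 0 := by
  set s := ξ ⬝ᵥ ξ
  set N := vecMulVec ν ν with hN
  have hVN : s • (V * N) = vecMulVec ξ ν := by
    rw [hN, mul_vecMulVec, ← smul_vecMulVec, smul_mulVec_of_leftInverse hVU hξ]
  rw [Matrix.sub_mul, Matrix.sub_mul, Matrix.smul_mul, Matrix.one_mul, Matrix.smul_mul, sub_eq_zero]
  calc
    s • (Uᵀ * N) = V * (s • (U * Uᵀ * N)) := by
      rw [Matrix.mul_smul, Matrix.mul_assoc U, ← Matrix.mul_assoc V, hVU, Matrix.one_mul]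
    _ = V * (s ^ 2 • (N * N)) := by
      rw [smul_mul_transpose_mul_vecMulVec_self hVU hξ hcomm]
    _ = s • (s • (V * N)) * N := by
      rw [Matrix.mul_smul, smul_smul, ← sq, Matrix.smul_mul, Matrix.mul_assoc]
    _ = vecMulVec ξ ξ * Uᵀ * N := by
      rw [hVN, vecMulVec_self_mul_transpose hξ]

end LeftInverse

/-- If `U` is invertible, `U ξ = ξ² ν` with `ξ² ≠ 0`, and `UUᵀ` commutes with `ν⊗ν`,
then `(ξ²I - ξ⊗ξ) Uᵀ (ν⊗ν) = 0`, i.e. `Π_s(ξ) Uᵀ Π_p(ν) = 0`. -/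
theorem statement11 (d : ℕ) (U : Matrix (Fin (d + 2)) (Fin (d + 2)) ℂ)
    (hU : IsUnit U) (ξ ν : Fin (d + 2) → ℂ)
    (h : U.mulVec ξ = (∑ i, ξ i * ξ i) • ν) (hξ : (∑ i, ξ i * ξ i) ≠ 0)
    (hcomm : Commute (U * Uᵀ) (tens ν ν)) :
    ((∑ i, ξ i * ξ i) • (1 : Matrix (Fin (d + 2)) (Fin (d + 2)) ℂ) - tens ξ ξ)
        * Uᵀ * tens ν ν = 0 := by
  obtain ⟨V, hVU⟩ := hU.exists_left_inv
  exact statement11_general hVU h hcomm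
end
end

section
/- Let d ≥ 2, let ζ' ∈ ℂ^{d−1}, set ζ = (0, ζ') ∈ ℂ^d and r₀ = ζ², and let ρ_s, ρ_p ∈ ℂ. Then det( U₀(ζ)ᵀ + ρ_s (I_d − e₁⊗e₁) + ρ_p (e₁⊗e₁) ) = (r₀ + ρ_s ρ_p) ρ_s^{d−2} (for d = 2 the factor ρ_s^{d−2} is interpreted as 1). -/
open Matrix Finset

noncomputable section

/-!
Split off the first coordinate. In `U₀(ξ)ᵀ + ρ_s (I - e₁ ⊗ e₁) + ρ_p (e₁ ⊗ e₁)` the remaining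
`d - 1` coordinates carry the scalar block `(ξ₁ + ρ_s) I`, bordered by `ξ'` and `-ξ'`, with corner
entry `ξ₁ + ρ_p`. Block elimination without division computes such a determinant up to powers of
`s = ξ₁ + ρ_s`; replacing `s` by an indeterminate, which is not a zero divisor, removes them, so
that `s = 0` needs no separate treatment.
-/

section BlockDeterminant

variable {R m n : Type*} [CommRing R] [Fintype m] [DecidableEq m] [Fintype n] [DecidableEq n]

theorem pow_mul_det_fromBlocks_smul_one₁₁ (s : R) (B : Matrix m n R) (C : Matrix n m R)
    (D : Matrix n n R) :
    s ^ Fintype.card n * (fromBlocks (s • 1) B C D).det =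
      s ^ Fintype.card m * (s • D - C * B).det := by
  have elimination : fromBlocks (s • 1) B C D * fromBlocks 1 (-B) 0 (s • 1) =
      fromBlocks (s • 1) 0 C (s • D - C * B) := by
    simp [fromBlocks_multiply, neg_add_eq_sub]
  have det_elimination := congrArg det elimination
  rw [det_mul, det_fromBlocks_zero₂₁, det_fromBlocks_zero₁₂] at det_elimination
  simpa [det_smul, mul_comm] using det_elimination

open Polynomial in
theorem det_fromBlocks_smul_one₁₁_of_le (s : R) (B : Matrix m n R) (C : Matrix n m R)
    (D : Matrix n n R) (hcard : Fintype.card n ≤ Fintype.card m) :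
    (fromBlocks (s • 1) B C D).det =
      s ^ (Fintype.card m - Fintype.card n) * (s • D - C * B).det := by
  have generic : (fromBlocks ((X : R[X]) • 1) (B.map Polynomial.C) (C.map Polynomial.C)
      (D.map Polynomial.C)).det =
      X ^ (Fintype.card m - Fintype.card n) *
        ((X : R[X]) • D.map Polynomial.C - (C * B).map Polynomial.C).det := by
    rw [← (isRegular_X_pow (Fintype.card n)).left.eq_iff, ← mul_assoc, ← pow_add,
      Nat.add_sub_cancel' hcard, Matrix.map_mul, pow_mul_det_fromBlocks_smul_one₁₁]
  have specialized := congrArg (evalRingHom s) generic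
  simp only [smul_eq_diagonal_mul, map_mul, map_sub, RingHom.map_det] at specialized
  simpa [-Matrix.map_mul, smul_eq_diagonal_mul, fromBlocks_map, diagonal_map, Matrix.map_map,
    Function.comp_def] using specialized

end BlockDeterminant

/-- The indexing of `Fin (n + 1)` that lists the nonzero indices first and puts `0` in a separate
block, so that `0` corresponds to the lower right block of `Matrix.fromBlocks`. -/
def succSumZeroEquiv (n : ℕ) : Fin n ⊕ Unit ≃ Fin (n + 1) :=
  ((finSuccEquiv n).trans (Equiv.optionEquivSumPUnit (Fin n))).symm

@[simp]
theorem succSumZeroEquiv_inl {n : ℕ} (i : Fin n) : succSumZeroEquiv n (.inl i) = i.succ := by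
  simp [succSumZeroEquiv]

@[simp]
theorem succSumZeroEquiv_inr {n : ℕ} (x : Unit) : succSumZeroEquiv n (.inr x) = 0 := by
  simp [succSumZeroEquiv]

theorem U0_submatrix_succSumZeroEquiv {n : ℕ} (ξ : Fin (n + 1) → ℂ) :
    (U0 ξ).submatrix (succSumZeroEquiv n) (succSumZeroEquiv n) =
      fromBlocks (ξ 0 • 1) (-replicateCol Unit (Fin.tail ξ)) (replicateRow Unit (Fin.tail ξ))
        (ξ 0 • 1) := by
  ext (i | _) (j | _) <;>
    simp [U0, tens, Matrix.sum_apply, Finset.sum_filter, Fin.sum_univ_succ, vecMulVec_apply,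
      Pi.single_apply, one_apply, Fin.tail, (Fin.succ_ne_zero _).symm]

theorem tens_single_zero_submatrix_succSumZeroEquiv (n : ℕ) :
    (tens (Pi.single 0 1) (Pi.single 0 1)).submatrix (succSumZeroEquiv n) (succSumZeroEquiv n) =
      fromBlocks 0 0 0 1 := by
  ext (i | _) (j | _) <;> simp [tens, vecMulVec_apply]

theorem transpose_U0_add_submatrix_succSumZeroEquiv {n : ℕ} (ξ : Fin (n + 1) → ℂ) (ρs ρp : ℂ) :
    ((U0 ξ)ᵀ + ρs • (1 - tens (Pi.single 0 1) (Pi.single 0 1))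
        + ρp • tens (Pi.single 0 1) (Pi.single 0 1)).submatrix
          (succSumZeroEquiv n) (succSumZeroEquiv n) =
      fromBlocks ((ξ 0 + ρs) • 1) (replicateCol Unit (Fin.tail ξ))
        (-replicateRow Unit (Fin.tail ξ)) ((ξ 0 + ρp) • 1) := by
  have one_sub_corner : (1 : Matrix (Fin n ⊕ Unit) (Fin n ⊕ Unit) ℂ) - fromBlocks 0 0 0 1 =
      fromBlocks 1 0 0 0 := by
    ext (i | _) (j | _) <;> simp [one_apply]
  simp only [submatrix_add, submatrix_sub, submatrix_smul, submatrix_one_equiv, Pi.add_apply,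
    Pi.sub_apply, Pi.smul_apply, ← transpose_submatrix, U0_submatrix_succSumZeroEquiv,
    tens_single_zero_submatrix_succSumZeroEquiv, one_sub_corner]
  simp [fromBlocks_transpose, fromBlocks_add, fromBlocks_smul, add_smul]

theorem statement12_general (d : ℕ) (ξ : Fin (d + 2) → ℂ) (ρs ρp : ℂ) :
    ((U0 ξ)ᵀ
        + ρs • ((1 : Matrix (Fin (d + 2)) (Fin (d + 2)) ℂ)
            - tens (Pi.single 0 1) (Pi.single 0 1))
        + ρp • tens (Pi.single 0 1) (Pi.single 0 1)).det
      = ((∑ i : Fin (d + 1), ξ i.succ * ξ i.succ) + (ξ 0 + ρs) * (ξ 0 + ρp)) * (ξ 0 + ρs) ^ d := by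
  have schur_det : ((ξ 0 + ρs) • (ξ 0 + ρp) • (1 : Matrix Unit Unit ℂ) -
        -replicateRow Unit (Fin.tail ξ) * replicateCol Unit (Fin.tail ξ)).det =
      (ξ 0 + ρs) * (ξ 0 + ρp) + ∑ i : Fin (d + 1), ξ i.succ * ξ i.succ := by
    simp [Matrix.mul_apply, Fin.tail]
  rw [← det_submatrix_equiv_self (succSumZeroEquiv (d + 1)),
    transpose_U0_add_submatrix_succSumZeroEquiv,
    det_fromBlocks_smul_one₁₁_of_le _ _ _ _ (by simp), schur_det, Fintype.card_fin,
    Fintype.card_unit, Nat.add_sub_cancel]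
  ring

/-- With `ζ = (0, ζ')`, `r₀ = ζ²`:
`det(U₀(ζ)ᵀ + ρ_s (I - e₁⊗e₁) + ρ_p (e₁⊗e₁)) = (r₀ + ρ_s ρ_p) ρ_s^{d-2}`
(the dimension here is `d + 2`). -/
theorem statement12 (d : ℕ) (ζ' : Fin (d + 1) → ℂ) (ρs ρp : ℂ) :
    let ζ : Fin (d + 2) → ℂ := Matrix.vecCons 0 ζ'
    ((U0 ζ)ᵀ
        + ρs • ((1 : Matrix (Fin (d + 2)) (Fin (d + 2)) ℂ)
            - tens (Pi.single 0 1) (Pi.single 0 1))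
        + ρp • tens (Pi.single 0 1) (Pi.single 0 1)).det
      = ((∑ i, ζ i * ζ i) + ρs * ρp) * ρs ^ d := by
  intro ζ
  simpa [ζ, Fin.sum_univ_succ] using statement12_general d ζ ρs ρp
end
end

section
/- Let ζ₂, ρ_s, ρ_p, c_s, c_p, z, n ∈ ℂ, set r₀ = ζ₂², μ = c_s, λ = c_p − 2c_s, and assume D := r₀ + ρ_s ρ_p ≠ 0, z²n = c_s(ρ_s² + r₀) and z²n = c_p(ρ_p² + r₀). Let ζ = (0, ζ₂) ∈ ℂ², Π_p = e₁⊗e₁, Π_s = I₂ − e₁⊗e₁, and W₀ = U₀(ζ)ᵀ + ρ_s Π_s + ρ_p Π_p (a 2×2 complex matrix, invertible since det W₀ = D ≠ 0); set T₂ = W₀^{−1}. Then λ ζ⊗e₁ + μ e₁⊗ζ + (c_s ρ_s² Π_s + c_p ρ_p² Π_p) T₂ + (c_s Π_s + c_p Π_p) U₀(ζ)ᵀ (ρ_s Π_s + ρ_p Π_p) T₂ equals the 2×2 matrix whose rows are ( z²n ρ_s / D , (−2μ D + z²n) ζ₂ / D ) and ( (2μ D − z²n) ζ₂ / D , z²n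 ρ_p / D ), in the convention that the (i,j) entry of a matrix M is the coefficient of g_j in the i-th component of Mg. -/
open Matrix Finset

noncomputable section

/-!
Put `C = c_sΠ_s + c_pΠ_p` and `R = ρ_sΠ_s + ρ_pΠ_p`, which are diagonal, so that `W₀ = U₀(ζ)ᵀ + R`.
The two terms containing `T₂` add up to `C (R + U₀(ζ)ᵀ) R T₂ = C (W₀ R W₀⁻¹)`, a conjugate of a
diagonal matrix. Its entries are computed with the adjugate of `W₀` and simplify because
`ρ_p² - ρ_sρ_p = (ρ_p² + r₀) - D`, and likewise for `ρ_s`; multiplying by `C` then turns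
`ρ_p² + r₀` and `ρ_s² + r₀` into `z²n`. The remaining two terms only shift the off-diagonal entries.
-/

lemma diagonal_mul_sq_mul_add {ι R : Type*} [Fintype ι] [DecidableEq ι] [Semiring R]
    (c r : ι → R) (U T : Matrix ι ι R) :
    diagonal (c * r ^ 2) * T + diagonal c * U * diagonal r * T =
      diagonal c * ((U + diagonal r) * diagonal r * T) := by
  have diagonal_factor : diagonal (c * r ^ 2) = diagonal c * diagonal r * diagonal r := by
    simp only [diagonal_mul_diagonal, mul_assoc, pow_two]
    rfl
  rw [diagonal_factor]
  simp only [add_mul, mul_add, mul_assoc, add_comm]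

section CommRing

variable {R : Type*} [CommRing R]

/-- The matrix `W₀ = U₀((0, ζ))ᵀ + ρs Π_s + ρp Π_p`, written out in coordinates so that its
determinant and adjugate can be computed over any commutative ring. -/
def factorMatrix (ζ ρs ρp : R) : Matrix (Fin 2) (Fin 2) R :=
  !![ρp, -ζ; ζ, ρs]

lemma det_factorMatrix (ζ ρs ρp : R) : (factorMatrix ζ ρs ρp).det = ζ ^ 2 + ρs * ρp := by
  rw [factorMatrix, det_fin_two_of]
  ring

lemma factorMatrix_mul_diagonal_mul_adjugate (ζ ρs ρp : R) :
    factorMatrix ζ ρs ρp * diagonal ![ρp, ρs] * (factorMatrix ζ ρs ρp).adjugate =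
      !![(ρp ^ 2 + ζ ^ 2) * ρs, ((ρp ^ 2 + ζ ^ 2) - (ζ ^ 2 + ρs * ρp)) * ζ;
         ((ζ ^ 2 + ρs * ρp) - (ρs ^ 2 + ζ ^ 2)) * ζ, (ρs ^ 2 + ζ ^ 2) * ρp] := by
  simp only [factorMatrix, adjugate_fin_two_of, diagonal_fin_two, cons_val_zero, cons_val_one,
    mul_fin_two]
  congrm !![?_, ?_; ?_, ?_] <;> ring

end CommRing

section Field

variable {K : Type*} [Field K]

lemma factorMatrix_conj_diagonal (ζ ρs ρp : K) :
    factorMatrix ζ ρs ρp * diagonal ![ρp, ρs] * (factorMatrix ζ ρs ρp)⁻¹ =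
      (ζ ^ 2 + ρs * ρp)⁻¹ •
        !![(ρp ^ 2 + ζ ^ 2) * ρs, ((ρp ^ 2 + ζ ^ 2) - (ζ ^ 2 + ρs * ρp)) * ζ;
           ((ζ ^ 2 + ρs * ρp) - (ρs ^ 2 + ζ ^ 2)) * ζ, (ρs ^ 2 + ζ ^ 2) * ρp] := by
  rw [Matrix.inv_def, Ring.inverse_eq_inv', det_factorMatrix, mul_smul_comm,
    factorMatrix_mul_diagonal_mul_adjugate]

lemma diagonal_mul_factorMatrix_conj_diagonal {ζ ρs ρp cs cp k : K}
    (hs : k = cs * (ρs ^ 2 + ζ ^ 2)) (hp : k = cp * (ρp ^ 2 + ζ ^ 2)) :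
    diagonal ![cp, cs] *
        (factorMatrix ζ ρs ρp * diagonal ![ρp, ρs] * (factorMatrix ζ ρs ρp)⁻¹) =
      (ζ ^ 2 + ρs * ρp)⁻¹ •
        !![k * ρs, (k - cp * (ζ ^ 2 + ρs * ρp)) * ζ;
           (cs * (ζ ^ 2 + ρs * ρp) - k) * ζ, k * ρp] := by
  rw [factorMatrix_conj_diagonal, mul_smul_comm]
  simp only [diagonal_fin_two, cons_val_zero, cons_val_one, mul_fin_two]
  congrm _ • !![?_, ?_; ?_, ?_]
  · linear_combination -ρs * hp
  · linear_combination -ζ * hp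
  · linear_combination ζ * hs
  · linear_combination -ρp * hs

lemma offDiagonal_add_inv_smul {D : K} (hD : D ≠ 0) (ζ ρs ρp cs cp k : K) :
    !![0, (cp - 2 * cs) * ζ; cs * ζ, 0] +
        D⁻¹ • !![k * ρs, (k - cp * D) * ζ; (cs * D - k) * ζ, k * ρp] =
      !![k * ρs / D, (-2 * cs * D + k) * ζ / D; (2 * cs * D - k) * ζ / D, k * ρp / D] := by
  simp only [smul_of, smul_cons, Matrix.smul_empty, of_add_of, add_cons, head_cons, tail_cons,
    empty_add_empty, smul_eq_mul]
  congrm !![?_, ?_; ?_, ?_] <;> field_simp <;> ring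

end Field

lemma tens_fin_two (ξ η : Fin 2 → ℂ) :
    tens ξ η = !![η 0 * ξ 0, η 0 * ξ 1; η 1 * ξ 0, η 1 * ξ 1] := by
  rw [eta_fin_two (tens ξ η)]
  rfl

lemma U0_fin_two (ξ : Fin 2 → ℂ) : U0 ξ = !![ξ 0, ξ 1; -ξ 1, ξ 0] := by
  have univ_ne_zero : (Finset.univ.filter fun j : Fin 2 => j ≠ 0) = {1} := by decide
  rw [U0, univ_ne_zero, Finset.sum_singleton, tens_fin_two, tens_fin_two]
  ext i j
  fin_cases i <;> fin_cases j <;> simp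

lemma smul_one_sub_tens_add_smul_tens (s p : ℂ) :
    s • ((1 : Matrix (Fin 2) (Fin 2) ℂ) - tens (Pi.single 0 1) (Pi.single 0 1)) +
      p • tens (Pi.single 0 1) (Pi.single 0 1) = diagonal ![p, s] := by
  rw [tens_fin_two]
  ext i j
  fin_cases i <;> fin_cases j <;> simp

lemma smul_tens_add_smul_tens (ζ a b : ℂ) :
    a • tens ![0, ζ] (Pi.single 0 1) + b • tens (Pi.single 0 1) ![0, ζ] =
      !![0, a * ζ; b * ζ, 0] := by
  simp [tens_fin_two]

lemma transpose_U0_add_diagonal (ζ ρs ρp : ℂ) :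
    (U0 ![0, ζ])ᵀ + diagonal ![ρp, ρs] = factorMatrix ζ ρs ρp := by
  rw [U0_fin_two, diagonal_fin_two]
  ext i j
  fin_cases i <;> fin_cases j <;> simp [factorMatrix]

/-- The 2×2 principal symbol computation (formula (5.25)): with `r₀ = ζ₂²`, `μ = c_s`,
`λ = c_p - 2c_s`, `D = r₀ + ρ_sρ_p ≠ 0`, `z²n = c_s(ρ_s² + r₀) = c_p(ρ_p² + r₀)`,
and `T₂ = W₀⁻¹` where `W₀ = U₀(ζ)ᵀ + ρ_sΠ_s + ρ_pΠ_p`, the matrix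
`λζ⊗e₁ + μe₁⊗ζ + (c_sρ_s²Π_s + c_pρ_p²Π_p)T₂ + (c_sΠ_s + c_pΠ_p)U₀(ζ)ᵀ(ρ_sΠ_s + ρ_pΠ_p)T₂`
equals `m₂⁰` given by (5.25). -/
theorem statement17 (ζ₂ ρs ρp cs cp z n : ℂ)
    (hD : ζ₂ ^ 2 + ρs * ρp ≠ 0)
    (hs : z ^ 2 * n = cs * (ρs ^ 2 + ζ₂ ^ 2))
    (hp : z ^ 2 * n = cp * (ρp ^ 2 + ζ₂ ^ 2)) :
    let D : ℂ := ζ₂ ^ 2 + ρs * ρp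
    let μ : ℂ := cs
    let lam : ℂ := cp - 2 * cs
    let e1 : Fin 2 → ℂ := Pi.single 0 1
    let ζ : Fin 2 → ℂ := ![0, ζ₂]
    let Pp := tens e1 e1
    let Ps := (1 : Matrix (Fin 2) (Fin 2) ℂ) - tens e1 e1
    let W₀ := (U0 ζ)ᵀ + ρs • Ps + ρp • Pp
    let T₂ := W₀⁻¹
    lam • tens ζ e1 + μ • tens e1 ζ
        + ((cs * ρs ^ 2) • Ps + (cp * ρp ^ 2) • Pp) * T₂
        + (cs • Ps + cp • Pp) * (U0 ζ)ᵀ * (ρs • Ps + ρp • Pp) * T₂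
      = !![z ^ 2 * n * ρs / D, (-2 * μ * D + z ^ 2 * n) * ζ₂ / D;
           (2 * μ * D - z ^ 2 * n) * ζ₂ / D, z ^ 2 * n * ρp / D] := by
  intro D μ lam e1 ζ Pp Ps W₀ T₂
  have hdiag (s p : ℂ) : s • Ps + p • Pp = diagonal ![p, s] :=
    smul_one_sub_tens_add_smul_tens s p
  have hW : (U0 ζ)ᵀ + diagonal ![ρp, ρs] = factorMatrix ζ₂ ρs ρp :=
    transpose_U0_add_diagonal ζ₂ ρs ρp
  have hT : T₂ = (factorMatrix ζ₂ ρs ρp)⁻¹ := by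
    rw [← hW, ← hdiag, ← add_assoc]
  have hCR : ![cp * ρp ^ 2, cs * ρs ^ 2] = ![cp, cs] * ![ρp, ρs] ^ 2 := by
    ext i
    fin_cases i <;> simp
  rw [hdiag, hdiag, hdiag, hCR, add_assoc, diagonal_mul_sq_mul_add, hW, hT,
    diagonal_mul_factorMatrix_conj_diagonal hs hp, smul_tens_add_smul_tens]
  exact offDiagonal_add_inv_smul hD ζ₂ ρs ρp cs cp (z ^ 2 * n)
end
end
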